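/- arXiv:1312.6323 — 9 statements merged into one kernel-verified Lean document; each statement's English description precedes it below -/
import Mathlib

section
/- If S is a separated C-structure, then every element a of S has at most one decomposition: if a hyper-term t is a decomposition of a and a hyper-term t' is also a decomposition of a, then t = t'. -/
open PFunctor

/-- The polynomial functor of a constructor vocabulary `C` with arities `arity`.
Hyper-terms over `C` are the elements of `(PF C arity).M`. -/
def PF (C : Type) (arity : C → ℕ) : PFunctor := ⟨C, fun c => Fin (arity c)⟩

/-- A `C`-structure `interp` on `S` is *separated* if each constructor is interpreted
injectively and distinct constructors have disjoint ranges. -/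
def Separated {C : Type} {arity : C → ℕ} {S : Type*}
    (interp : ∀ c : C, (Fin (arity c) → S) → S) : Prop :=
  (∀ c, Function.Injective (interp c)) ∧
    ∀ c d, c ≠ d → Disjoint (Set.range (interp c)) (Set.range (interp d))

/-- A decomposition relation between hyper-terms and elements of a `C`-structure. -/
def IsDecompRel {C : Type} {arity : C → ℕ} {S : Type*}
    (interp : ∀ c : C, (Fin (arity c) → S) → S)
    (R : (PF C arity).M → S → Prop) : Prop :=
  ∀ t a, R t a → ∃ (c : C) (f : Fin (arity c) → (PF C arity).M) (b : Fin (arity c) → S),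
    t = PFunctor.M.mk ⟨c, f⟩ ∧ a = interp c b ∧ ∀ i, R (f i) (b i)

/-- A hyper-term `t` is a decomposition of `a : S` if `R t a` for some
decomposition relation `R`. -/
def IsDecomposition {C : Type} {arity : C → ℕ} {S : Type*}
    (interp : ∀ c : C, (Fin (arity c) → S) → S)
    (t : (PF C arity).M) (a : S) : Prop :=
  ∃ R, IsDecompRel interp R ∧ R t a

/-- In a separated `C`-structure, every element has at most one decomposition. -/
theorem decomposition_unique {C : Type} [Fintype C] {arity : C → ℕ} {S : Type*}
    (interp : ∀ c : C, (Fin (arity c) → S) → S)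
    (hsep : Separated interp) (a : S) (t t' : (PF C arity).M)
    (h : IsDecomposition interp t a) (h' : IsDecomposition interp t' a) :
    t = t' := by
  obtain ⟨R, hR, hRt⟩ := h
  obtain ⟨R', hR', hRt'⟩ := h'
  refine PFunctor.M.bisim (fun x y => ∃ a, R x a ∧ R' y a) ?_ t t' ⟨a, hRt, hRt'⟩
  rintro x y ⟨a, hx, hy⟩
  obtain ⟨c, f, b, rfl, hab, hf⟩ := hR x a hx
  obtain ⟨d, g, e, rfl, hae, hg⟩ := hR' y a hy
  by_cases hcd : c = d
  · subst hcd
    have hbe : b = e := hsep.1 c (hab.symm.trans hae)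
    subst hbe
    exact ⟨c, f, g, PFunctor.M.dest_mk _, PFunctor.M.dest_mk _, fun i => ⟨b i, hf i, hg i⟩⟩
  · exact absurd ⟨e, hae.symm⟩ (Set.disjoint_left.mp (hsep.2 c d hcd) ⟨b, hab.symm⟩)
end

section
/- If S is a separated C-structure with interpretation interp, then every map φ : P.M → S satisfying φ (PFunctor.M.mk ⟨c, f⟩) = interp c (fun i => φ (f i)) for all constructors c and all f : Fin (arity c) → P.M is injective. -/
open PFunctor

/-- The canonical `C`-structure on hyper-terms. -/
def mkA {C : Type} {arity : C → ℕ} (c : C) (f : Fin (arity c) → (PF C arity).M) :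
    (PF C arity).M :=
  PFunctor.M.mk ⟨c, f⟩

/-- Any homomorphism from hyper-terms into a separated `C`-structure is injective. -/
theorem hom_injective_of_separated {C : Type} [Fintype C] {arity : C → ℕ} {S : Type*}
    (interp : ∀ c : C, (Fin (arity c) → S) → S)
    (hsep : Separated interp) (φ : (PF C arity).M → S)
    (hφ : ∀ (c : C) (f : Fin (arity c) → (PF C arity).M),
      φ (PFunctor.M.mk ⟨c, f⟩) = interp c (fun i => φ (f i))) :
    Function.Injective φ := by
  intro x y hxy
  refine PFunctor.M.bisim (fun x y => φ x = φ y) ?_ x y hxy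
  intro x y h
  obtain ⟨c, f, hx⟩ : ∃ (c : C) (f : Fin (arity c) → (PF C arity).M),
      PFunctor.M.dest x = ⟨c, f⟩ := ⟨_, _, rfl⟩
  obtain ⟨d, g, hy⟩ : ∃ (c : C) (f : Fin (arity c) → (PF C arity).M),
      PFunctor.M.dest y = ⟨c, f⟩ := ⟨_, _, rfl⟩
  have hx' := PFunctor.M.mk_dest x
  have hy' := PFunctor.M.mk_dest y
  rw [hx] at hx'
  rw [hy] at hy'
  have h2 : interp c (fun i => φ (f i)) = interp d (fun i => φ (g i)) := by
    rw [← hφ, ← hφ]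
    exact (congrArg φ hx').trans (h.trans (congrArg φ hy').symm)
  have hcd : c = d := by
    by_contra hne
    exact Set.disjoint_left.mp (hsep.2 c d hne) ⟨_, rfl⟩ ⟨_, h2.symm⟩
  subst hcd
  exact ⟨c, f, g, hx, hy, fun i => congrFun (hsep.1 c h2) i⟩
end

section
/- In the canonical C-structure mkA on P.M, every hyper-term t is a decomposition of itself, and t is the unique hyper-term that is a decomposition of t (i.e., if t' is a decomposition of t then t' = t). -/
open PFunctor

/-- In the canonical `C`-structure every hyper-term is its own unique decomposition. -/
theorem canonical_decomposition_self_unique {C : Type} [Fintype C] {arity : C → ℕ}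
    (t : (PF C arity).M) :
    IsDecomposition (mkA (arity := arity)) t t ∧
      ∀ t' : (PF C arity).M, IsDecomposition (mkA (arity := arity)) t' t → t' = t := by
  constructor
  · refine ⟨fun x y => x = y, ?_, rfl⟩
    rintro x _ rfl
    exact ⟨(PFunctor.M.dest x).1, (PFunctor.M.dest x).2, (PFunctor.M.dest x).2,
      (PFunctor.M.mk_dest x).symm, (PFunctor.M.mk_dest x).symm, fun _ => rfl⟩
  · rintro t' ⟨R, hR, h⟩
    refine PFunctor.M.bisim R ?_ t' t h
    intro x y hxy
    obtain ⟨c, f, b, hx, hy, hi⟩ := hR x y hxy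
    exact ⟨c, f, b, by rw [hx]; exact PFunctor.M.dest_mk _,
      by rw [hy]; exact PFunctor.M.dest_mk _, hi⟩
end

section
/- Let S be a separated C-structure with interpretation interp, Rules a rule system over (ι, κ), and GS : κ → Set S, GA : κ → Set P.M corresponding prior interpretations. Let ΦS be the operator induced by Rules relative to interp and GS, and ΦA the operator induced by Rules relative to the canonical structure mkA on P.M and GA. Then for every i : ι and every a ∈ (lfp ΦS) i there exists a hyper-term t such that t is a decomposition of a and t ∈ (lfp ΦA) i. -/
open PFunctor

/-- The monotone operator on `ι → Set S` induced by a rule system `Rules` relative to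
a `C`-structure `interp` on `S` and prior interpretations `G : κ → Set S`. -/
def ruleOp {C : Type} {arity : C → ℕ} {S : Type*} {ι κ : Type*}
    (interp : ∀ c : C, (Fin (arity c) → S) → S)
    (Rules : Set (Σ _ : ι, Σ c : C, Fin (arity c) → ι ⊕ κ))
    (G : κ → Set S) : (ι → Set S) →o (ι → Set S) where
  toFun X i :=
    {a | ∃ r ∈ Rules, r.1 = i ∧ ∃ b : Fin (arity r.2.1) → S,
      a = interp r.2.1 b ∧ ∀ j,
        (∀ i', r.2.2 j = Sum.inl i' → b j ∈ X i') ∧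
        (∀ k, r.2.2 j = Sum.inr k → b j ∈ G k)}
  monotone' := by
    intro X Y hXY i a ha
    obtain ⟨r, hr, hi, b, hab, hj⟩ := ha
    exact ⟨r, hr, hi, b, hab, fun j =>
      ⟨fun i' h => hXY i' ((hj j).1 i' h), (hj j).2⟩⟩

/-- Prior interpretations `GS` on `S` and `GA` on hyper-terms correspond. -/
def Corresponds {C : Type} {arity : C → ℕ} {S : Type*} {κ : Type*}
    (interp : ∀ c : C, (Fin (arity c) → S) → S)
    (GS : κ → Set S) (GA : κ → Set (PF C arity).M) : Prop :=
  (∀ k, ∀ a ∈ GS k, ∃ t, IsDecomposition interp t a ∧ t ∈ GA k) ∧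
  (∀ k (t : (PF C arity).M) (a : S), t ∈ GA k → IsDecomposition interp t a → a ∈ GS k)

/-- Inductive types in a separated `D`-correct structure: every element of the least
fixed point has a decomposition lying in the least fixed point over hyper-terms. -/
theorem lfp_decomposition_exists {C : Type} [Fintype C] {arity : C → ℕ} {S : Type*}
    {ι κ : Type*}
    (interp : ∀ c : C, (Fin (arity c) → S) → S) (hsep : Separated interp)
    (Rules : Set (Σ _ : ι, Σ c : C, Fin (arity c) → ι ⊕ κ))
    (GS : κ → Set S) (GA : κ → Set (PF C arity).M)
    (hcorr : Corresponds interp GS GA) :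
    ∀ i : ι, ∀ a ∈ OrderHom.lfp (ruleOp interp Rules GS) i,
      ∃ t : (PF C arity).M, IsDecomposition interp t a ∧
        t ∈ OrderHom.lfp (ruleOp (mkA (arity := arity)) Rules GA) i := by
  let X : ι → Set S := fun i => {a | ∃ t : (PF C arity).M, IsDecomposition interp t a ∧
        t ∈ OrderHom.lfp (ruleOp (mkA (arity := arity)) Rules GA) i}
  have hle : OrderHom.lfp (ruleOp interp Rules GS) ≤ X := by
    apply OrderHom.lfp_le
    rintro i a ⟨r, hr, hi, b, hab, hj⟩
    have key : ∀ j, ∃ t : (PF C arity).M, IsDecomposition interp t (b j) ∧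
        (∀ i', r.2.2 j = Sum.inl i' →
          t ∈ OrderHom.lfp (ruleOp (mkA (arity := arity)) Rules GA) i') ∧
        (∀ k, r.2.2 j = Sum.inr k → t ∈ GA k) := by
      intro j
      rcases hq : r.2.2 j with i' | k
      · obtain ⟨t, ht, hm⟩ := (hj j).1 i' hq
        refine ⟨t, ht, ?_, ?_⟩
        · intro i'' h
          cases h
          exact hm
        · intro k h
          cases h
      · obtain ⟨t, ht, hm⟩ := hcorr.1 k _ ((hj j).2 k hq)
        refine ⟨t, ht, ?_, ?_⟩
        · intro i'' h
          cases h
        · intro k h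
          cases h
          exact hm
    choose f hf hl hg using key
    refine ⟨mkA r.2.1 f, ⟨fun t a => IsDecomposition interp t a ∨
      (t = mkA r.2.1 f ∧ a = interp r.2.1 b), ?_, Or.inr ⟨rfl, hab⟩⟩, ?_⟩
    · rintro t a (⟨R, hR, h⟩ | ⟨rfl, rfl⟩)
      · obtain ⟨c, g, d, h1, h2, h3⟩ := hR t a h
        exact ⟨c, g, d, h1, h2, fun j => Or.inl ⟨R, hR, h3 j⟩⟩
      · exact ⟨r.2.1, f, b, rfl, rfl, fun j => Or.inl (hf j)⟩
    · rw [← OrderHom.map_lfp]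
      exact ⟨r, hr, hi, f, rfl, fun j => ⟨hl j, hg j⟩⟩
  exact fun i a ha => hle i ha
end

section
/- Let S be a separated C-structure with interpretation interp, Rules a rule system over (ι, κ), and GS : κ → Set S, GA : κ → Set P.M corresponding prior interpretations. Let ΦS be the operator induced by Rules relative to interp and GS, and ΦA the operator induced by Rules relative to the canonical structure mkA on P.M and GA. Then for every i : ι, every hyper-term t ∈ (lfp ΦA) i, and every a ∈ S such that t is a decomposition of a, one has a ∈ (lfp ΦS) i. -/
open PFunctor

/-- Inductive types, converse direction: any element whose decomposition lies in the
least fixed point over hyper-terms itself lies in the least fixed point over `S`. -/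
theorem mem_lfp_of_decomposition {C : Type} [Fintype C] {arity : C → ℕ} {S : Type*}
    {ι κ : Type*}
    (interp : ∀ c : C, (Fin (arity c) → S) → S) (hsep : Separated interp)
    (Rules : Set (Σ _ : ι, Σ c : C, Fin (arity c) → ι ⊕ κ))
    (GS : κ → Set S) (GA : κ → Set (PF C arity).M)
    (hcorr : Corresponds interp GS GA) :
    ∀ i : ι, ∀ t ∈ OrderHom.lfp (ruleOp (mkA (arity := arity)) Rules GA) i,
      ∀ a : S, IsDecomposition interp t a →
        a ∈ OrderHom.lfp (ruleOp interp Rules GS) i := by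
  have key : OrderHom.lfp (ruleOp (mkA (arity := arity)) Rules GA) ≤
      fun i => {t | ∀ a : S, IsDecomposition interp t a →
        a ∈ OrderHom.lfp (ruleOp interp Rules GS) i} := by
    apply OrderHom.lfp_le
    rintro i t ⟨⟨i0, c, q⟩, hr, rfl, f, rfl, hj⟩ a ⟨R, hR, hRa⟩
    obtain ⟨c', f', b, ht, rfl, hb⟩ := hR _ _ hRa
    have ht' := PFunctor.M.mk_inj ht
    obtain ⟨rfl, hf⟩ := Sigma.mk.inj ht'
    obtain rfl := eq_of_heq hf
    rw [← OrderHom.map_lfp]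
    refine ⟨⟨i0, c, q⟩, hr, rfl, b, rfl, fun j => ⟨fun i' h => ?_, fun k h => ?_⟩⟩
    · exact (hj j).1 i' h (b j) ⟨R, hR, hb j⟩
    · exact hcorr.2 k (f j) (b j) ((hj j).2 k h) ⟨R, hR, hb j⟩
  intro i t ht a ha
  exact key i ht a ha
end

section
/- Let S be a separated C-structure with interpretation interp, Rules a rule system over (ι, κ), and GS : κ → Set S, GA : κ → Set P.M corresponding prior interpretations. Let ΦS be the operator induced by Rules relative to interp and GS, and ΦA the operator induced by Rules relative to the canonical structure mkA on P.M and GA. Then for every i : ι and every a ∈ (gfp ΦS) i there exists a hyper-term t such that t is a decomposition of a and t ∈ (gfp ΦA) i. -/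
open PFunctor

theorem isDecomposition_isDecompRel {C : Type} {arity : C → ℕ} {S : Type*}
    (interp : ∀ c : C, (Fin (arity c) → S) → S) :
    IsDecompRel interp (IsDecomposition interp) := by
  rintro t a ⟨R, hR, h⟩
  obtain ⟨c, f, b, h1, h2, h3⟩ := hR t a h
  exact ⟨c, f, b, h1, h2, fun i => ⟨R, hR, h3 i⟩⟩

/-- Coinductive types in a separated `D`-correct structure: every element of the greatest
fixed point has a decomposition lying in the greatest fixed point over hyper-terms. -/
theorem gfp_decomposition_exists {C : Type} [Fintype C] {arity : C → ℕ} {S : Type*}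
    {ι κ : Type*}
    (interp : ∀ c : C, (Fin (arity c) → S) → S) (hsep : Separated interp)
    (Rules : Set (Σ _ : ι, Σ c : C, Fin (arity c) → ι ⊕ κ))
    (GS : κ → Set S) (GA : κ → Set (PF C arity).M)
    (hcorr : Corresponds interp GS GA) :
    ∀ i : ι, ∀ a ∈ OrderHom.gfp (ruleOp interp Rules GS) i,
      ∃ t : (PF C arity).M, IsDecomposition interp t a ∧
        t ∈ OrderHom.gfp (ruleOp (mkA (arity := arity)) Rules GA) i := by
  classical
  have key : ∀ p : (Σ' (i : ι) (a : S), a ∈ OrderHom.gfp (ruleOp interp Rules GS) i),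
      ∃ r ∈ Rules, r.1 = p.1 ∧ ∃ (b : Fin (arity r.2.1) → S)
        (g : Fin (arity r.2.1) →
          (Σ' (i : ι) (a : S), a ∈ OrderHom.gfp (ruleOp interp Rules GS) i) ⊕ (PF C arity).M),
        p.2.1 = interp r.2.1 b ∧ ∀ j,
          (∃ i' h, r.2.2 j = Sum.inl i' ∧ g j = Sum.inl ⟨i', b j, h⟩) ∨
          (∃ k t, r.2.2 j = Sum.inr k ∧ g j = Sum.inr t ∧
            IsDecomposition interp t (b j) ∧ t ∈ GA k) := by
    rintro ⟨i, a, h⟩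
    have h' := h
    rw [← OrderHom.map_gfp] at h'
    obtain ⟨r, hr, hi, b, hab, hj⟩ := h'
    have : ∀ j, ∃ x : (Σ' (i : ι) (a : S), a ∈ OrderHom.gfp (ruleOp interp Rules GS) i) ⊕
          (PF C arity).M,
          (∃ i' h, r.2.2 j = Sum.inl i' ∧ x = Sum.inl ⟨i', b j, h⟩) ∨
          (∃ k t, r.2.2 j = Sum.inr k ∧ x = Sum.inr t ∧
            IsDecomposition interp t (b j) ∧ t ∈ GA k) := by
      intro j
      rcases hq : r.2.2 j with i' | k
      · exact ⟨_, Or.inl ⟨i', (hj j).1 i' hq, rfl, rfl⟩⟩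
      · obtain ⟨t, ht, ht'⟩ := hcorr.1 k _ ((hj j).2 k hq)
        exact ⟨_, Or.inr ⟨k, t, rfl, rfl, ht, ht'⟩⟩
    choose g hg using this
    exact ⟨r, hr, hi, b, g, hab, hg⟩
  choose r hr hri b g hb hg using key
  let step : (Σ' (i : ι) (a : S), a ∈ OrderHom.gfp (ruleOp interp Rules GS) i) ⊕
      (PF C arity).M → (PF C arity)
        ((Σ' (i : ι) (a : S), a ∈ OrderHom.gfp (ruleOp interp Rules GS) i) ⊕ (PF C arity).M) :=
    fun x => match x with
      | Sum.inl p => ⟨(r p).2.1, g p⟩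
      | Sum.inr t => (PF C arity).map Sum.inr (PFunctor.M.dest t)
  have hinl : ∀ p, M.corec step (Sum.inl p) =
      mkA (r p).2.1 (fun j => M.corec step (g p j)) := fun p => M.corec_def _ _
  have hinr : ∀ t, M.corec step (Sum.inr t) = t := by
    intro t
    refine PFunctor.M.bisim (fun x y => x = M.corec step (Sum.inr y)) ?_ _ _ rfl
    rintro _ y rfl
    refine ⟨(M.dest y).1, fun j => M.corec step (Sum.inr ((M.dest y).2 j)), (M.dest y).2,
      ?_, rfl, fun j => rfl⟩
    rw [M.dest_corec]
    rfl
  have hR : IsDecompRel interp (fun t a => IsDecomposition interp t a ∨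
      ∃ i h, t = M.corec step (Sum.inl ⟨i, a, h⟩)) := by
    rintro t a (h | ⟨i, h, rfl⟩)
    · obtain ⟨c, f, b, h1, h2, h3⟩ := isDecomposition_isDecompRel interp t a h
      exact ⟨c, f, b, h1, h2, fun i => Or.inl (h3 i)⟩
    · refine ⟨_, _, b ⟨i, a, h⟩, hinl _, hb ⟨i, a, h⟩, fun j => ?_⟩
      rcases hg ⟨i, a, h⟩ j with ⟨i', h', -, e⟩ | ⟨k, t, -, e, hd, -⟩
      · exact Or.inr ⟨i', h', by rw [e]⟩
      · left
        rw [e, hinr]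
        exact hd
  intro i a h
  refine ⟨M.corec step (Sum.inl ⟨i, a, h⟩), ⟨_, hR, Or.inr ⟨i, h, rfl⟩⟩, ?_⟩
  have hle : (fun i => {t | ∃ a h, t = M.corec step (Sum.inl ⟨i, a, h⟩)}) ≤
      OrderHom.gfp (ruleOp (mkA (arity := arity)) Rules GA) := by
    apply OrderHom.le_gfp
    rintro i _ ⟨a, h, rfl⟩
    refine ⟨r ⟨i, a, h⟩, hr _, hri _, _, hinl _, fun j => ?_⟩
    rcases hg ⟨i, a, h⟩ j with ⟨i', h', e', e⟩ | ⟨k, t, e', e, -, hk⟩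
    · refine ⟨fun i'' hi => ?_, fun k hk => ?_⟩
      · rw [e'] at hi
        cases hi
        exact ⟨_, h', by rw [e]⟩
      · rw [e'] at hk
        cases hk
    · refine ⟨fun i'' hi => ?_, fun k' hk' => ?_⟩
      · rw [e'] at hi
        cases hi
      · rw [e'] at hk'
        cases hk'
        rw [e, hinr]
        exact hk
  exact hle i ⟨a, h, rfl⟩
end

section
/- Let S be a separated C-structure with interpretation interp, Rules a rule system over (ι, κ), and GS : κ → Set S, GA : κ → Set P.M corresponding prior interpretations. Let ΦS be the operator induced by Rules relative to interp and GS, and ΦA the operator induced by Rules relative to the canonical structure mkA on P.M and GA. Then for every i : ι, every hyper-term t ∈ (gfp ΦA) i, and every a ∈ S such that t is a decomposition of a, one has a ∈ (gfp ΦS) i. -/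
open PFunctor

/-- Coinductive types, converse direction: any element whose decomposition lies in the
greatest fixed point over hyper-terms lies in the greatest fixed point over `S`. -/
theorem mem_gfp_of_decomposition {C : Type} [Fintype C] {arity : C → ℕ} {S : Type*}
    {ι κ : Type*}
    (interp : ∀ c : C, (Fin (arity c) → S) → S) (hsep : Separated interp)
    (Rules : Set (Σ _ : ι, Σ c : C, Fin (arity c) → ι ⊕ κ))
    (GS : κ → Set S) (GA : κ → Set (PF C arity).M)
    (hcorr : Corresponds interp GS GA) :
    ∀ i : ι, ∀ t ∈ OrderHom.gfp (ruleOp (mkA (arity := arity)) Rules GA) i,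
      ∀ a : S, IsDecomposition interp t a →
        a ∈ OrderHom.gfp (ruleOp interp Rules GS) i := by
  intro i t ht a hta
  let X : ι → Set S := fun i => {a | ∃ t ∈ OrderHom.gfp (ruleOp (mkA (arity := arity)) Rules GA) i,
    IsDecomposition interp t a}
  have hX : X ≤ ruleOp interp Rules GS X := by
    rintro i a ⟨t, ht, R, hR, hRta⟩
    rw [← OrderHom.map_gfp] at ht
    obtain ⟨r, hr, hi, f, htf, hj⟩ := ht
    obtain ⟨c, g, b, htg, hab, hgb⟩ := hR t a hRta
    have h := PFunctor.M.mk_inj (htf.symm.trans htg)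
    obtain ⟨i0, d, q⟩ := r
    have hcd : d = c := congrArg Sigma.fst h
    subst hcd
    have hfg : f = g := eq_of_heq (Sigma.mk.inj h).2
    subst hfg
    refine ⟨_, hr, hi, b, hab, fun j => ⟨fun i' h' => ?_, fun k h' => ?_⟩⟩
    · exact ⟨f j, (hj j).1 i' h', R, hR, hgb j⟩
    · exact hcorr.2 k (f j) (b j) ((hj j).2 k h') ⟨R, hR, hgb j⟩
  exact OrderHom.le_gfp _ hX i ⟨t, ht, hta⟩
end

section
/- Let S and Q be separated C-structures, Rules a rule system over (ι, κ), and GS : κ → Set S, GQ : κ → Set Q prior interpretations each corresponding to the same GA : κ → Set P.M. Let ΦS and ΦQ be the operators induced by Rules relative to S with GS and to Q with GQ respectively. If a hyper-term t is a decomposition of a ∈ S and also a decomposition of b ∈ Q, then for every i : ι, a ∈ (lfp ΦS) i if and only if b ∈ (lfp ΦQ) i. -/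
open PFunctor

theorem sep_inv {C : Type} {arity : C → ℕ} {S : Type*}
    {interp : ∀ c : C, (Fin (arity c) → S) → S} (hsep : Separated interp)
    {c d : C} {x : Fin (arity c) → S} {y : Fin (arity d) → S}
    (h : interp c x = interp d y) : ∃ e : c = d, x = e ▸ y := by
  by_cases e : c = d
  · subst e
    exact ⟨rfl, hsep.1 c h⟩
  · exact absurd h.symm (fun h => Set.disjoint_left.1 (hsep.2 c d e) ⟨x, rfl⟩ ⟨y, h⟩)

theorem decomp_inv {C : Type} {arity : C → ℕ} {S : Type*}
    {interp : ∀ c : C, (Fin (arity c) → S) → S} {t : (PF C arity).M} {a : S}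
    (h : IsDecomposition interp t a) :
    ∃ (c : C) (f : Fin (arity c) → (PF C arity).M) (b : Fin (arity c) → S),
      t = PFunctor.M.mk ⟨c, f⟩ ∧ a = interp c b ∧
        ∀ i, IsDecomposition interp (f i) (b i) := by
  obtain ⟨R, hR, hta⟩ := h
  obtain ⟨c, f, b, h1, h2, h3⟩ := hR t a hta
  exact ⟨c, f, b, h1, h2, fun i => ⟨R, hR, h3 i⟩⟩

theorem decomp_inv_sep {C : Type} {arity : C → ℕ} {S : Type*}
    {interp : ∀ c : C, (Fin (arity c) → S) → S} (hsep : Separated interp)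
    {t : (PF C arity).M} {c : C} {x : Fin (arity c) → S}
    (h : IsDecomposition interp t (interp c x)) :
    ∃ f : Fin (arity c) → (PF C arity).M, t = PFunctor.M.mk ⟨c, f⟩ ∧
        ∀ i, IsDecomposition interp (f i) (x i) := by
  obtain ⟨d, f, b, h1, h2, h3⟩ := decomp_inv h
  obtain ⟨e, he⟩ := sep_inv hsep h2
  subst e
  subst he
  exact ⟨f, h1, h3⟩

theorem decomp_inv_term {C : Type} {arity : C → ℕ} {S : Type*}
    {interp : ∀ c : C, (Fin (arity c) → S) → S}
    {c : C} {f : Fin (arity c) → (PF C arity).M} {a : S}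
    (h : IsDecomposition interp (PFunctor.M.mk ⟨c, f⟩ : (PF C arity).M) a) :
    ∃ b : Fin (arity c) → S, a = interp c b ∧
        ∀ i, IsDecomposition interp (f i) (b i) := by
  obtain ⟨d, g, b, h1, h2, h3⟩ := decomp_inv h
  have h4 := PFunctor.M.mk_inj h1
  cases h4
  exact ⟨b, h2, h3⟩

theorem decomp_unique {C : Type} {arity : C → ℕ} {S : Type*}
    {interp : ∀ c : C, (Fin (arity c) → S) → S} (hsep : Separated interp)
    {t t' : (PF C arity).M} {a : S}
    (h : IsDecomposition interp t a) (h' : IsDecomposition interp t' a) : t = t' := by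
  refine PFunctor.M.bisim
    (fun t t' => ∃ a, IsDecomposition interp t a ∧ IsDecomposition interp t' a)
    ?_ t t' ⟨a, h, h'⟩
  rintro t t' ⟨a, h, h'⟩
  obtain ⟨c, f, b, rfl, rfl, h3⟩ := decomp_inv h
  obtain ⟨f', rfl, h3'⟩ := decomp_inv_sep hsep h'
  exact ⟨c, f, f', PFunctor.M.dest_mk _, PFunctor.M.dest_mk _, fun i => ⟨b i, h3 i, h3' i⟩⟩

theorem lfp_mem_transfer {C : Type} {arity : C → ℕ}
    {S Q : Type*} {ι κ : Type*}
    (interpS : ∀ c : C, (Fin (arity c) → S) → S) (hsepS : Separated interpS)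
    (interpQ : ∀ c : C, (Fin (arity c) → Q) → Q)
    (Rules : Set (Σ _ : ι, Σ c : C, Fin (arity c) → ι ⊕ κ))
    (GS : κ → Set S) (GQ : κ → Set Q) (GA : κ → Set (PF C arity).M)
    (hcorrS : Corresponds interpS GS GA) (hcorrQ : Corresponds interpQ GQ GA)
    (t : (PF C arity).M) (a : S) (b : Q)
    (ha : IsDecomposition interpS t a) (hb : IsDecomposition interpQ t b) (i : ι)
    (hi : a ∈ OrderHom.lfp (ruleOp interpS Rules GS) i) :
      b ∈ OrderHom.lfp (ruleOp interpQ Rules GQ) i := by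
  have key : OrderHom.lfp (ruleOp interpS Rules GS) ≤
      (fun i => {a | ∀ t b, IsDecomposition interpS t a → IsDecomposition interpQ t b →
        b ∈ OrderHom.lfp (ruleOp interpQ Rules GQ) i}) := by
    apply OrderHom.lfp_le
    rintro i a ⟨r, hr, hri, x, rfl, hx⟩ t b ha hb
    obtain ⟨f, rfl, hf⟩ := decomp_inv_sep hsepS ha
    obtain ⟨y, rfl, hy⟩ := decomp_inv_term hb
    rw [← OrderHom.map_lfp]
    refine ⟨r, hr, hri, y, rfl, fun j => ⟨fun i' h => ?_, fun k h => ?_⟩⟩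
    · exact (hx j).1 i' h _ _ (hf j) (hy j)
    · obtain ⟨t', ht', hk⟩ := hcorrS.1 k _ ((hx j).2 k h)
      have e := decomp_unique hsepS ht' (hf j)
      subst e
      exact hcorrQ.2 k _ _ hk (hy j)
  exact key i hi t b ha hb

/-- Corollary (inductive case): elements of two separated `D`-correct structures with a
common decomposition have the same inductive types. -/
theorem lfp_mem_iff_of_common_decomposition {C : Type} [Fintype C] {arity : C → ℕ}
    {S Q : Type*} {ι κ : Type*}
    (interpS : ∀ c : C, (Fin (arity c) → S) → S) (hsepS : Separated interpS)
    (interpQ : ∀ c : C, (Fin (arity c) → Q) → Q) (hsepQ : Separated interpQ)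
    (Rules : Set (Σ _ : ι, Σ c : C, Fin (arity c) → ι ⊕ κ))
    (GS : κ → Set S) (GQ : κ → Set Q) (GA : κ → Set (PF C arity).M)
    (hcorrS : Corresponds interpS GS GA) (hcorrQ : Corresponds interpQ GQ GA)
    (t : (PF C arity).M) (a : S) (b : Q)
    (ha : IsDecomposition interpS t a) (hb : IsDecomposition interpQ t b) :
    ∀ i : ι, a ∈ OrderHom.lfp (ruleOp interpS Rules GS) i ↔
      b ∈ OrderHom.lfp (ruleOp interpQ Rules GQ) i := by
  intro i
  exact ⟨lfp_mem_transfer interpS hsepS interpQ Rules GS GQ GA hcorrS hcorrQ t a b ha hb i,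
    lfp_mem_transfer interpQ hsepQ interpS Rules GQ GS GA hcorrQ hcorrS t b a hb ha i⟩
end

section
/- Let C := Bool with arity ≡ 1 (two unary constructors), and let S := Bool carry the C-structure interp c := fun _ => c (each constructor interpreted as a constant function). Then every hyper-term t ∈ P.M is a decomposition of the Bool labelling its root, i.e. of (PFunctor.M.dest t).fst; consequently the set of decompositions of the element true (and likewise of false) is uncountable (not countable). Hence in a non-separated structure an element may have uncountably many decompositions. -/
open PFunctor

/-- The hyper-term (an infinite unary tree) with a given stream of labels. -/
noncomputable def streamTerm : (ℕ → Bool) → (PF Bool (fun _ => 1)).M :=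
  PFunctor.M.corec (F := PF Bool (fun _ => 1))
    (fun s => (⟨s 0, fun _ n => s (n + 1)⟩ : (PF Bool (fun _ => 1)) (ℕ → Bool)))

/-- The unique immediate subtree. -/
def tailTerm (t : (PF Bool (fun _ => 1)).M) : (PF Bool (fun _ => 1)).M :=
  (PFunctor.M.dest t).2 (0 : Fin 1)

/-- The root label. -/
def headTerm (t : (PF Bool (fun _ => 1)).M) : Bool := (PFunctor.M.dest t).1

theorem dest_streamTerm (s : ℕ → Bool) : PFunctor.M.dest (streamTerm s) =
    (⟨s 0, fun _ => streamTerm (fun n => s (n + 1))⟩ :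
      (PF Bool (fun _ => 1)) (PF Bool (fun _ => 1)).M) := by
  exact PFunctor.M.dest_corec (P := PF Bool (fun _ => 1)) _ s

theorem headTerm_streamTerm (s : ℕ → Bool) : headTerm (streamTerm s) = s 0 := by
  exact congrArg (fun x : (PF Bool (fun _ => 1)) (PF Bool (fun _ => 1)).M => x.1)
    (dest_streamTerm s)

theorem tailTerm_streamTerm (s : ℕ → Bool) :
    tailTerm (streamTerm s) = streamTerm (fun n => s (n + 1)) := by
  exact congrArg (fun x : (PF Bool (fun _ => 1)) (PF Bool (fun _ => 1)).M => x.2 (0 : Fin 1))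
    (dest_streamTerm s)

theorem label_streamTerm (n : ℕ) : ∀ s : ℕ → Bool,
    headTerm (tailTerm^[n] (streamTerm s)) = s n := by
  induction n with
  | zero => exact headTerm_streamTerm
  | succ n ih =>
    intro s
    rw [Function.iterate_succ_apply, tailTerm_streamTerm, ih]

theorem streamTerm_injective : Function.Injective streamTerm := by
  intro s s' h
  funext n
  rw [← label_streamTerm n s, h, label_streamTerm]

theorem decomposition_root (t : (PF Bool (fun _ => 1)).M) :
    IsDecomposition (S := Bool) (fun c => fun _ => c) t (PFunctor.M.dest t).fst := by
  refine ⟨fun t a => a = (PFunctor.M.dest t).fst, ?_, rfl⟩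
  intro t a h
  exact ⟨(PFunctor.M.dest t).fst, (PFunctor.M.dest t).snd,
    fun i => (PFunctor.M.dest ((PFunctor.M.dest t).snd i)).fst,
    (PFunctor.M.mk_dest t).symm, h, fun _ => rfl⟩

theorem not_countable_decompositions (b : Bool) :
    ¬ (Set.Countable {t : (PF Bool (fun _ => 1)).M |
        IsDecomposition (S := Bool) (fun c => fun _ => c) t b}) := by
  intro h
  let g : (ℕ → Bool) → (PF Bool (fun _ => 1)).M :=
    fun s => mkA (arity := fun _ => 1) b (fun _ => streamTerm s)
  have hg : Function.Injective g := by
    intro s s' e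
    have e' : tailTerm (g s) = tailTerm (g s') := congrArg tailTerm e
    exact streamTerm_injective e'
  have hu : (Set.univ : Set (ℕ → Bool)).Countable :=
    (h.preimage hg).mono (fun s _ => decomposition_root (g s))
  have : Uncountable (ℕ → Bool) := by
    rw [← Cardinal.aleph0_lt_mk_iff]
    simpa using Cardinal.cantor Cardinal.aleph0
  exact Set.not_countable_univ hu

/-- In the non-separated `Bool`-structure on `Bool` where each of the two unary
constructors is interpreted as a constant function, every hyper-term is a decomposition
of its root label; hence `true` (and `false`) has uncountably many decompositions. -/
theorem nonseparated_uncountably_many_decompositions :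
    (∀ t : (PF Bool (fun _ => 1)).M,
      IsDecomposition (S := Bool) (fun c => fun _ => c) t (PFunctor.M.dest t).fst) ∧
    ¬ (Set.Countable {t : (PF Bool (fun _ => 1)).M |
        IsDecomposition (S := Bool) (fun c => fun _ => c) t true}) ∧
    ¬ (Set.Countable {t : (PF Bool (fun _ => 1)).M |
        IsDecomposition (S := Bool) (fun c => fun _ => c) t false}) := by
  exact ⟨decomposition_root, not_countable_decompositions true, not_countable_decompositions false⟩
end
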